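/- Let R be a Noetherian ring, I an ideal, M a finitely generated R-module, f ∈ R with multiplication by f injective on M/Γ_I(M). Then Ann_M(f) ⊆ Γ_I(M), and consequently for all sufficiently large n, f is a nonzerodivisor on I^n M. -/

import Mathlib

/-- The `I`-torsion submodule `Γ_I(M) = ⋃ n, (0 :_M I^n)`. -/
noncomputable def torsionGamma {R : Type*} [CommRing R] (I : Ideal R) (M : Type*)
    [AddCommGroup M] [Module R M] : Submodule R M :=
  ⨆ n : ℕ, Submodule.torsionBySet R M ((I ^ n : Ideal R) : Set R)

/-!
The ascending chain `(0 :_M I^n)` stabilizes, so some `I^m` kills `Γ_I(M)`. By Artin–Rees there is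
a `k` with `I^n M ∩ Γ_I(M) ⊆ I^(n - k) Γ_I(M)` for `n ≥ k`, and the right-hand side vanishes once
`n ≥ m + k`. Since the elements killed by `f` lie in `Γ_I(M)`, none of them but `0` is in `I^n M`.
-/

open Filter

section

variable {R M : Type*} [CommRing R] [AddCommGroup M] [Module R M]

theorem ker_lsmul_le_of_isSMulRegular_quotient {N : Submodule R M} {f : R}
    (hf : IsSMulRegular (M ⧸ N) f) : LinearMap.ker (LinearMap.lsmul R M f) ≤ N :=
  (LinearMap.ker_le_comap _).trans ((isSMulRegular_on_quot_iff_lsmul_comap_le N f).mp hf)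

theorem smul_torsionBySet_eq_bot (J : Ideal R) :
    J • Submodule.torsionBySet R M (J : Set R) = ⊥ :=
  le_bot_iff.mp <| Submodule.smul_le.mpr fun r hr _ hx ↦
    (Submodule.mem_torsionBySet_iff _ _).mp hx ⟨r, hr⟩

theorem eventually_pow_smul_top_inf_le_pow_smul [IsNoetherianRing R] [Module.Finite R M]
    (I : Ideal R) (N : Submodule R M) (m : ℕ) :
    ∀ᶠ n in atTop, I ^ n • ⊤ ⊓ N ≤ I ^ m • N := by
  obtain ⟨k, artin_rees⟩ := I.exists_pow_inf_eq_pow_smul N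
  filter_upwards [eventually_ge_atTop (m + k)] with n hn
  calc
    I ^ n • ⊤ ⊓ N = I ^ (n - k) • (I ^ k • ⊤ ⊓ N) := artin_rees n (by omega)
    _ ≤ I ^ m • N := Submodule.smul_mono (Ideal.pow_le_pow_right (by omega)) inf_le_right

variable (M)

theorem exists_torsionGamma_eq_torsionBySet_pow [IsNoetherian R M] (I : Ideal R) :
    ∃ m : ℕ, torsionGamma I M = Submodule.torsionBySet R M ((I ^ m : Ideal R) : Set R) :=
  let powTorsion : ℕ →o Submodule R M :=
    ⟨_, fun i j hij ↦ Submodule.torsionBySet_le_torsionBySet_pow i j hij I⟩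
  ⟨_, WellFoundedGT.iSup_eq_monotonicSequenceLimit powTorsion⟩

theorem exists_pow_smul_torsionGamma_eq_bot [IsNoetherian R M] (I : Ideal R) :
    ∃ m : ℕ, I ^ m • torsionGamma I M = ⊥ := by
  obtain ⟨m, hm⟩ := exists_torsionGamma_eq_torsionBySet_pow M I
  exact ⟨m, hm ▸ smul_torsionBySet_eq_bot (I ^ m)⟩

theorem eventually_disjoint_pow_smul_top_torsionGamma [IsNoetherianRing R] [Module.Finite R M]
    (I : Ideal R) : ∀ᶠ n in atTop, Disjoint (I ^ n • ⊤) (torsionGamma I M) := by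
  obtain ⟨m, hm⟩ := exists_pow_smul_torsionGamma_eq_bot M I
  filter_upwards [eventually_pow_smul_top_inf_le_pow_smul I (torsionGamma I M) m] with n hn
  exact disjoint_iff_inf_le.mpr (hn.trans hm.le)

end

/-- If multiplication by `f` is injective on `M/Γ_I(M)` then `Ann_M(f) ⊆ Γ_I(M)`,
and `f` is a nonzerodivisor on `I^n M` for all large `n`. -/
theorem stmt_17 {R M : Type*} [CommRing R] [IsNoetherianRing R] [AddCommGroup M] [Module R M]
    [Module.Finite R M] (I : Ideal R) (f : R)
    (hf : Function.Injective (fun x : M ⧸ torsionGamma I M => f • x)) :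
    LinearMap.ker (LinearMap.lsmul R M f) ≤ torsionGamma I M ∧
      ∃ n₀ : ℕ, ∀ n ≥ n₀, ∀ x ∈ (I ^ n • (⊤ : Submodule R M)), f • x = 0 → x = 0 := by
  have ker_le : LinearMap.ker (LinearMap.lsmul R M f) ≤ torsionGamma I M :=
    ker_lsmul_le_of_isSMulRegular_quotient hf
  obtain ⟨n₀, hn₀⟩ := eventually_atTop.mp (eventually_disjoint_pow_smul_top_torsionGamma M I)
  exact ⟨ker_le, n₀, fun n hn x hx hfx ↦
    Submodule.disjoint_def.mp (hn₀ n hn) x hx (ker_le (LinearMap.mem_ker.mpr hfx))⟩
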